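/- The map B ↦ ⊥F(B), where F(B) is the smallest torsion free class containing B, induces a bijection from the set of isomorphism classes of bricks of mod A to the set of completely meet irreducible elements of the complete lattice tors A. -/

import Mathlib

open CategoryTheory

/-- `𝒯` is a torsion class of finite-dimensional (= finitely generated) left `A`-modules:
a class of finitely generated modules, closed under isomorphism, containing `0`,
closed under quotients and closed under extensions. -/
def IsTorsionClass (A : Type) [Ring A] (𝒯 : Set (ModuleCat.{0} A)) : Prop :=
  (∀ M ∈ 𝒯, Module.Finite A M) ∧
  (∀ M ∈ 𝒯, ∀ N : ModuleCat.{0} A, Nonempty (M ≃ₗ[A] N) → N ∈ 𝒯) ∧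
  (∃ Z ∈ 𝒯, Subsingleton Z) ∧
  (∀ M ∈ 𝒯, ∀ N : ModuleCat.{0} A, ∀ f : M →ₗ[A] N, Function.Surjective f → N ∈ 𝒯) ∧
  (∀ X Y Z : ModuleCat.{0} A, X ∈ 𝒯 → Z ∈ 𝒯 →
    ∀ (f : X →ₗ[A] Y) (g : Y →ₗ[A] Z), Function.Injective f → Function.Surjective g →
      LinearMap.range f = LinearMap.ker g → Y ∈ 𝒯)

/-- `ℱ` is a torsion-free class: closed under isomorphism, containing `0`,
closed under submodules and closed under extensions. -/
def IsTorsionFreeClass (A : Type) [Ring A] (ℱ : Set (ModuleCat.{0} A)) : Prop :=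
  (∀ M ∈ ℱ, Module.Finite A M) ∧
  (∀ M ∈ ℱ, ∀ N : ModuleCat.{0} A, Nonempty (M ≃ₗ[A] N) → N ∈ ℱ) ∧
  (∃ Z ∈ ℱ, Subsingleton Z) ∧
  (∀ M ∈ ℱ, ∀ N : ModuleCat.{0} A, ∀ f : N →ₗ[A] M, Function.Injective f → N ∈ ℱ) ∧
  (∀ X Y Z : ModuleCat.{0} A, X ∈ ℱ → Z ∈ ℱ →
    ∀ (f : X →ₗ[A] Y) (g : Y →ₗ[A] Z), Function.Injective f → Function.Surjective g →
      LinearMap.range f = LinearMap.ker g → Y ∈ ℱ)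

/-- `𝒞⊥ = {Y | Hom(X,Y) = 0 for all X ∈ 𝒞}` (within finite-dimensional modules). -/
def rightPerp (A : Type) [Ring A] (𝒞 : Set (ModuleCat.{0} A)) : Set (ModuleCat.{0} A) :=
  {Y | Module.Finite A Y ∧ ∀ X ∈ 𝒞, ∀ f : X →ₗ[A] Y, f = 0}

/-- `⊥𝒞 = {X | Hom(X,Y) = 0 for all Y ∈ 𝒞}` (within finite-dimensional modules). -/
def leftPerp (A : Type) [Ring A] (𝒞 : Set (ModuleCat.{0} A)) : Set (ModuleCat.{0} A) :=
  {X | Module.Finite A X ∧ ∀ Y ∈ 𝒞, ∀ f : X →ₗ[A] Y, f = 0}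

/-- A brick: a nonzero finite-dimensional module all of whose nonzero endomorphisms
are invertible. -/
def IsBrick (A : Type) [Ring A] (B : ModuleCat.{0} A) : Prop :=
  Module.Finite A B ∧ Nontrivial B ∧ ∀ f : B →ₗ[A] B, f ≠ 0 → Function.Bijective f

/-- `T(𝒞)`, the smallest torsion class containing `𝒞`. -/
def TgenSet (A : Type) [Ring A] (𝒞 : Set (ModuleCat.{0} A)) : Set (ModuleCat.{0} A) :=
  {X | ∀ 𝒯, IsTorsionClass A 𝒯 → 𝒞 ⊆ 𝒯 → X ∈ 𝒯}

/-- `T(B)`, the smallest torsion class containing the module `B`. -/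
def Tgen (A : Type) [Ring A] (B : ModuleCat.{0} A) : Set (ModuleCat.{0} A) :=
  TgenSet A {B}

/-- `F(B)`, the smallest torsion-free class containing the module `B`. -/
def Fgen (A : Type) [Ring A] (B : ModuleCat.{0} A) : Set (ModuleCat.{0} A) :=
  {X | ∀ ℱ, IsTorsionFreeClass A ℱ → B ∈ ℱ → X ∈ ℱ}

/-- The join of a family of torsion classes in `tors A`: the intersection of all torsion
classes containing every member of the family. -/
def torsJoin (A : Type) [Ring A] (S : Set (Set (ModuleCat.{0} A))) : Set (ModuleCat.{0} A) :=
  {M | ∀ 𝒲, IsTorsionClass A 𝒲 → (∀ 𝒯 ∈ S, 𝒯 ⊆ 𝒲) → M ∈ 𝒲}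
/-- A completely meet irreducible element of the lattice of torsion classes:
a torsion class `ℳ` possessing a torsion class `ℳ⁺` such that, for every torsion class
`𝒴`, `ℳ ⊊ 𝒴` if and only if `ℳ⁺ ⊆ 𝒴`. -/
def IsCMITors (A : Type) [Ring A] (ℳ : Set (ModuleCat.{0} A)) : Prop :=
  IsTorsionClass A ℳ ∧ ∃ ℳs, IsTorsionClass A ℳs ∧
    ∀ 𝒴, IsTorsionClass A 𝒴 → (ℳ ⊂ 𝒴 ↔ ℳs ⊆ 𝒴)

/-!
For a finitely generated module `B`, the class `⊥F(B)` is `⊥{B}`, so only maps into `B` itself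
matter.

Every proper quotient of a brick `B` lies in `⊥{B}`, since a nonzero map `B ⧸ U → B` would give a
non-injective nonzero endomorphism of `B`. If a torsion class `𝒴` strictly contains `⊥{B}`, some
`X ∈ 𝒴` has a nonzero map `f : X → B`; then `range f` and `B ⧸ range f` lie in `𝒴`, hence so does
`B`. Thus the torsion class generated by `⊥{B}` and `B` is the unique cover of `⊥{B}`.

Conversely, let `ℳ⁺` be the unique cover of `ℳ`. Take `X ∈ ℳ⁺` not in `ℳ` and a maximal `U ≤ X`
with `X ⧸ U ∉ ℳ`; then `B = X ⧸ U` is not in `ℳ`, but all its proper quotients are. The same range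
argument shows that no member of `ℳ` maps nontrivially to `B`, so `ℳ ⊆ ⊥{B}` and every nonzero
endomorphism of `B` is injective, hence bijective because `B` is Artinian. Equality holds since
`B ∈ ℳ⁺` but `B ∉ ⊥{B}`.

If `⊥{B} = ⊥{B'}`, every nonzero map between the bricks `B` and `B'` is injective, and nonzero maps
exist in both directions.
-/

section LinearMaps

variable {R M N P Q : Type*} [Ring R] [AddCommGroup M] [AddCommGroup N] [AddCommGroup P]
  [AddCommGroup Q] [Module R M] [Module R N] [Module R P] [Module R Q]

theorem linearMap_eq_zero_of_exact_of_surjective {f : M →ₗ[R] N} {g : N →ₗ[R] P}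
    (hfg : Function.Exact f g) (hg : Function.Surjective g) (hM : ∀ u : M →ₗ[R] Q, u = 0)
    (hP : ∀ v : P →ₗ[R] Q, v = 0) (h : N →ₗ[R] Q) : h = 0 := by
  have hker : LinearMap.range f ≤ LinearMap.ker h := LinearMap.range_le_ker_iff.mpr (hM _)
  have hzero := hP ((LinearMap.range f).liftQ h hker ∘ₗ (hfg.linearEquivOfSurjective hg).symm)
  ext x
  simpa using LinearMap.congr_fun hzero (g x)

theorem linearMap_eq_zero_of_injective_of_exact {f : M →ₗ[R] N} {g : N →ₗ[R] P}
    (hf : Function.Injective f) (hfg : Function.Exact f g) (hM : ∀ u : Q →ₗ[R] M, u = 0)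
    (hP : ∀ v : Q →ₗ[R] P, v = 0) (h : Q →ₗ[R] N) : h = 0 := by
  have hrange (x : Q) : h x ∈ LinearMap.range f :=
    (hfg (h x)).mp (LinearMap.congr_fun (hP (g ∘ₗ h)) x)
  have hzero := hM ((LinearEquiv.ofInjective f hf).symm ∘ₗ h.codRestrict _ hrange)
  ext x
  simpa [Subtype.ext_iff] using LinearMap.congr_fun hzero x

end LinearMaps

section TorsionClasses

variable {A : Type} [Ring A] {𝒯 𝒴 ℳ 𝒞 : Set (ModuleCat.{0} A)} {X B B' : ModuleCat.{0} A}

namespace IsTorsionClass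

theorem mem_of_surjective (h𝒯 : IsTorsionClass A 𝒯) {M N : ModuleCat.{0} A} (hM : M ∈ 𝒯)
    (f : M →ₗ[A] N) (hf : Function.Surjective f) : N ∈ 𝒯 :=
  h𝒯.2.2.2.1 M hM N f hf

theorem mem_of_subsingleton (h𝒯 : IsTorsionClass A 𝒯) (M : ModuleCat.{0} A) [Subsingleton M] :
    M ∈ 𝒯 := by
  obtain ⟨Z, hZ, -⟩ := h𝒯.2.2.1
  exact h𝒯.mem_of_surjective hZ 0 fun x => ⟨0, Subsingleton.elim _ x⟩

theorem mem_of_submodule_of_quotient (h𝒯 : IsTorsionClass A 𝒯) {M : ModuleCat.{0} A}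
    (U : Submodule A M) (hU : ModuleCat.of A U ∈ 𝒯) (hMU : ModuleCat.of A (M ⧸ U) ∈ 𝒯) : M ∈ 𝒯 :=
  h𝒯.2.2.2.2 (ModuleCat.of A U) M (ModuleCat.of A (M ⧸ U)) hU hMU U.subtype U.mkQ
    U.subtype_injective U.mkQ_surjective (by simp)

theorem mem_of_linearMap_ne_zero (h𝒯 : IsTorsionClass A 𝒯) (hX : X ∈ 𝒯)
    (hB : ∀ U : Submodule A B, U ≠ ⊥ → ModuleCat.of A (B ⧸ U) ∈ 𝒯) {f : X →ₗ[A] B} (hf : f ≠ 0) :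
    B ∈ 𝒯 := by
  have hrange : ModuleCat.of A (LinearMap.range f) ∈ 𝒯 :=
    h𝒯.mem_of_surjective (N := ModuleCat.of A (LinearMap.range f)) hX f.rangeRestrict
      f.surjective_rangeRestrict
  exact h𝒯.mem_of_submodule_of_quotient _ hrange (hB _ (mt LinearMap.range_eq_bot.mp hf))

theorem exists_quotient_notMem_forall_quotient_mem (h𝒯 : IsTorsionClass A 𝒯) [IsNoetherian A X]
    (hX : X ∉ 𝒯) :
    ∃ U : Submodule A X, ModuleCat.of A (X ⧸ U) ∉ 𝒯 ∧
      ∀ V : Submodule A (X ⧸ U), V ≠ ⊥ → ModuleCat.of A ((X ⧸ U) ⧸ V) ∈ 𝒯 := by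
  have hbot : ModuleCat.of A (X ⧸ (⊥ : Submodule A X)) ∉ 𝒯 := fun h =>
    hX (h𝒯.mem_of_surjective h _ (Submodule.quotEquivOfEqBot ⊥ rfl).surjective)
  obtain ⟨U, hU⟩ := exists_maximal_of_wellFoundedGT
    (fun U : Submodule A X => ModuleCat.of A (X ⧸ U) ∉ 𝒯) ⟨⊥, hbot⟩
  refine ⟨U, hU.prop, fun V hV => ?_⟩
  have hlt : U < V.comap U.mkQ := by
    simpa using Submodule.comap_strictMono_of_surjective U.mkQ_surjective (bot_lt_iff_ne_bot.mpr hV)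
  have hmem : ModuleCat.of A (X ⧸ V.comap U.mkQ) ∈ 𝒯 := not_not.mp (hU.not_prop_of_gt hlt)
  have hsurj : Function.Surjective ((V.comap U.mkQ).mapQ V U.mkQ le_rfl) :=
    LinearMap.range_eq_top.mp (by simp [Submodule.range_mapQ])
  exact h𝒯.mem_of_surjective (N := ModuleCat.of A ((X ⧸ U) ⧸ V)) hmem _ hsurj

end IsTorsionClass

theorem isTorsionClass_leftPerp (𝒞 : Set (ModuleCat.{0} A)) :
    IsTorsionClass A (leftPerp A 𝒞) := by
  have mem_of_surjective : ∀ M ∈ leftPerp A 𝒞, ∀ N : ModuleCat.{0} A, ∀ f : M →ₗ[A] N,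
      Function.Surjective f → N ∈ leftPerp A 𝒞 := by
    rintro M ⟨_, hM⟩ N f hf
    refine ⟨.of_surjective f hf, fun Y hY g => ?_⟩
    rw [← LinearMap.cancel_right hf, hM Y hY (g ∘ₗ f), LinearMap.zero_comp]
  refine ⟨fun _ hM => hM.1, ?_, ?_, mem_of_surjective, ?_⟩
  · rintro M hM N ⟨e⟩
    exact mem_of_surjective M hM N e e.surjective
  · exact ⟨ModuleCat.of A PUnit, ⟨inferInstance, fun _ _ _ => Subsingleton.elim _ _⟩,
      inferInstance⟩
  · rintro X Y Z ⟨_, hX⟩ ⟨_, hZ⟩ f g - hg hfg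
    have hexact : Function.Exact f g := LinearMap.exact_iff.mpr hfg.symm
    exact ⟨.of_exact hexact hg, fun W hW =>
      linearMap_eq_zero_of_exact_of_surjective hexact hg (hX W hW) (hZ W hW)⟩

theorem isTorsionFreeClass_rightPerp [IsNoetherianRing A] (𝒞 : Set (ModuleCat.{0} A)) :
    IsTorsionFreeClass A (rightPerp A 𝒞) := by
  have mem_of_injective : ∀ M ∈ rightPerp A 𝒞, ∀ N : ModuleCat.{0} A, ∀ f : N →ₗ[A] M,
      Function.Injective f → N ∈ rightPerp A 𝒞 := by
    rintro M ⟨_, hM⟩ N f hf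
    refine ⟨.of_injective f hf, fun X hX g => ?_⟩
    rw [← LinearMap.cancel_left hf, hM X hX (f ∘ₗ g), LinearMap.comp_zero]
  refine ⟨fun _ hM => hM.1, ?_, ?_, mem_of_injective, ?_⟩
  · rintro M hM N ⟨e⟩
    exact mem_of_injective M hM N e.symm e.symm.injective
  · exact ⟨ModuleCat.of A PUnit, ⟨inferInstance, fun _ _ _ => Subsingleton.elim _ _⟩,
      inferInstance⟩
  · rintro X Y Z ⟨_, hX⟩ ⟨_, hZ⟩ f g hf hg hfg
    have hexact : Function.Exact f g := LinearMap.exact_iff.mpr hfg.symm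
    exact ⟨.of_exact hexact hg, fun W hW =>
      linearMap_eq_zero_of_injective_of_exact hf hexact (hX W hW) (hZ W hW)⟩

theorem mem_leftPerp_singleton :
    X ∈ leftPerp A {B} ↔ Module.Finite A X ∧ ∀ f : X →ₗ[A] B, f = 0 := by
  simp [leftPerp]

theorem leftPerp_Fgen [IsNoetherianRing A] [Module.Finite A B] :
    leftPerp A (Fgen A B) = leftPerp A {B} := by
  ext X
  rw [mem_leftPerp_singleton]
  refine ⟨fun ⟨hX, hXB⟩ => ⟨hX, hXB B fun _ _ hB => hB⟩, fun ⟨hX, hXB⟩ => ⟨hX, fun Y hY => ?_⟩⟩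
  have hB : B ∈ rightPerp A {X} := ⟨‹_›, by rintro _ rfl; exact hXB⟩
  exact (hY _ (isTorsionFreeClass_rightPerp {X}) hB).2 X rfl

theorem notMem_leftPerp_singleton_self [Nontrivial B] : B ∉ leftPerp A {B} := fun hB =>
  one_ne_zero (α := Module.End A B) ((mem_leftPerp_singleton.mp hB).2 LinearMap.id)

theorem isTorsionClass_sInter {S : Set (Set (ModuleCat.{0} A))} (hS : S.Nonempty)
    (h : ∀ 𝒯 ∈ S, IsTorsionClass A 𝒯) : IsTorsionClass A (⋂₀ S) := by
  obtain ⟨𝒰, h𝒰⟩ := hS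
  refine ⟨fun M hM => (h 𝒰 h𝒰).1 M (hM 𝒰 h𝒰), fun M hM N e 𝒯 h𝒯 => ?_, ?_,
    fun M hM N f hf 𝒯 h𝒯 => (h 𝒯 h𝒯).mem_of_surjective (hM 𝒯 h𝒯) f hf,
    fun X Y Z hX hZ f g hf hg hfg 𝒯 h𝒯 => ?_⟩
  · exact (h 𝒯 h𝒯).2.1 M (hM 𝒯 h𝒯) N e
  · exact ⟨ModuleCat.of A PUnit, fun 𝒯 h𝒯 => (h 𝒯 h𝒯).mem_of_subsingleton _, inferInstance⟩
  · exact (h 𝒯 h𝒯).2.2.2.2 X Y Z (hX 𝒯 h𝒯) (hZ 𝒯 h𝒯) f g hf hg hfg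

theorem isTorsionClass_TgenSet (h𝒞 : ∀ M ∈ 𝒞, Module.Finite A M) :
    IsTorsionClass A (TgenSet A 𝒞) := by
  have hgen : TgenSet A 𝒞 = ⋂₀ {𝒯 | IsTorsionClass A 𝒯 ∧ 𝒞 ⊆ 𝒯} := by
    ext X
    simp [TgenSet]
  rw [hgen]
  have h𝒞sub : 𝒞 ⊆ leftPerp A ∅ := fun M hM => ⟨h𝒞 M hM, by simp⟩
  exact isTorsionClass_sInter ⟨_, isTorsionClass_leftPerp ∅, h𝒞sub⟩ fun _ h => h.1

theorem TgenSet_subset_iff (h𝒯 : IsTorsionClass A 𝒯) : TgenSet A 𝒞 ⊆ 𝒯 ↔ 𝒞 ⊆ 𝒯 :=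
  ⟨fun h _ hM => h fun _ _ h𝒞 => h𝒞 hM, fun h _ hM => hM 𝒯 h𝒯 h⟩

theorem injective_of_forall_quotient_mem_leftPerp
    (hB : ∀ U : Submodule A B, U ≠ ⊥ → ModuleCat.of A (B ⧸ U) ∈ leftPerp A {B'})
    {f : B →ₗ[A] B'} (hf : f ≠ 0) : Function.Injective f := by
  rw [← LinearMap.ker_eq_bot]
  by_contra hker
  have hlift : (LinearMap.ker f).liftQ f le_rfl = 0 :=
    (mem_leftPerp_singleton.mp (hB _ hker)).2 _
  exact hf (by rw [← Submodule.liftQ_mkQ _ f le_rfl, hlift, LinearMap.zero_comp])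

namespace IsBrick

theorem quotient_mem_leftPerp (hB : IsBrick A B) (U : Submodule A B) (hU : U ≠ ⊥) :
    ModuleCat.of A (B ⧸ U) ∈ leftPerp A {B} := by
  have := hB.1
  refine mem_leftPerp_singleton.mpr ⟨inferInstanceAs (Module.Finite A (B ⧸ U)), fun g => ?_⟩
  by_contra hg
  have hcomp : g ∘ₗ U.mkQ ≠ 0 := fun h =>
    hg ((LinearMap.cancel_right U.mkQ_surjective).mp (h.trans (LinearMap.zero_comp _).symm))
  have hinj : Function.Injective U.mkQ := 
    Function.Injective.of_comp (f := g) (hB.2.2 _ hcomp).1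
  exact hU (by rw [← Submodule.ker_mkQ U, LinearMap.ker_eq_bot.mpr hinj])

theorem leftPerp_ssubset_iff (hB : IsBrick A B) (h𝒴 : IsTorsionClass A 𝒴) :
    leftPerp A {B} ⊂ 𝒴 ↔ insert B (leftPerp A {B}) ⊆ 𝒴 := by
  have := hB.2.1
  rw [Set.insert_subset_iff]
  refine ⟨fun hlt => ⟨?_, hlt.1⟩, fun ⟨hB𝒴, hle⟩ =>
    ⟨hle, fun hge => notMem_leftPerp_singleton_self (hge hB𝒴)⟩⟩
  obtain ⟨X, hX, hXB⟩ := Set.exists_of_ssubset hlt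
  obtain ⟨f, hf⟩ : ∃ f : X →ₗ[A] B, f ≠ 0 := by
    simpa [mem_leftPerp_singleton, h𝒴.1 X hX] using hXB
  exact h𝒴.mem_of_linearMap_ne_zero hX (fun U hU => hlt.1 (hB.quotient_mem_leftPerp U hU)) hf

theorem isCMITors_leftPerp (hB : IsBrick A B) : IsCMITors A (leftPerp A {B}) := by
  have hfinite : ∀ M ∈ insert B (leftPerp A {B}), Module.Finite A M :=
    Set.forall_mem_insert.mpr ⟨hB.1, fun _ hM => hM.1⟩
  exact ⟨isTorsionClass_leftPerp {B}, TgenSet A (insert B (leftPerp A {B})),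
    isTorsionClass_TgenSet hfinite, fun 𝒴 h𝒴 =>
      (hB.leftPerp_ssubset_iff h𝒴).trans (TgenSet_subset_iff h𝒴).symm⟩

theorem exists_injective_of_leftPerp_eq (hB : IsBrick A B)
    (h : leftPerp A {B} = leftPerp A {B'}) : ∃ f : B →ₗ[A] B', Function.Injective f := by
  have := hB.2.1
  obtain ⟨f, hf⟩ : ∃ f : B →ₗ[A] B', f ≠ 0 := by
    have hBB' : B ∉ leftPerp A {B'} := h ▸ notMem_leftPerp_singleton_self
    simpa [mem_leftPerp_singleton, hB.1] using hBB'
  exact ⟨f, injective_of_forall_quotient_mem_leftPerp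
    (fun U hU => h ▸ hB.quotient_mem_leftPerp U hU) hf⟩

theorem nonempty_linearEquiv_of_leftPerp_eq (hB : IsBrick A B) (hB' : IsBrick A B')
    (h : leftPerp A {B} = leftPerp A {B'}) : Nonempty (B ≃ₗ[A] B') := by
  have := hB'.2.1
  obtain ⟨f, hf⟩ := hB.exists_injective_of_leftPerp_eq h
  obtain ⟨g, hg⟩ := hB'.exists_injective_of_leftPerp_eq h.symm
  have hinj : Function.Injective (f ∘ₗ g) := by simpa using hf.comp hg
  have hsurj : Function.Surjective (f ∘ g) := (hB'.2.2 _ (LinearMap.ne_zero_of_injective hinj)).2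
  exact ⟨.ofBijective f ⟨hf, hsurj.of_comp⟩⟩

end IsBrick

namespace IsTorsionClass

variable (h𝒯 : IsTorsionClass A 𝒯) (hB : B ∉ 𝒯)
  (hquot : ∀ U : Submodule A B, U ≠ ⊥ → ModuleCat.of A (B ⧸ U) ∈ 𝒯)

include h𝒯 hB hquot

theorem subset_leftPerp_of_forall_quotient_mem : 𝒯 ⊆ leftPerp A {B} := by
  refine fun X hX => mem_leftPerp_singleton.mpr ⟨h𝒯.1 X hX, fun f => ?_⟩
  by_contra hf
  exact hB (h𝒯.mem_of_linearMap_ne_zero hX hquot hf)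

theorem isBrick_of_forall_quotient_mem [IsArtinian A B] [Module.Finite A B] : IsBrick A B := by
  have hnontrivial : Nontrivial B := by
    by_contra hcon
    have := not_nontrivial_iff_subsingleton.mp hcon
    exact hB (h𝒯.mem_of_subsingleton B)
  refine ⟨‹_›, hnontrivial, fun f hf => IsArtinian.bijective_of_injective_endomorphism f ?_⟩
  exact injective_of_forall_quotient_mem_leftPerp
    (fun U hU => h𝒯.subset_leftPerp_of_forall_quotient_mem hB hquot (hquot U hU)) hf

end IsTorsionClass

theorem IsCMITors.exists_isBrick_eq_leftPerp [IsArtinianRing A] (hℳ : IsCMITors A ℳ) :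
    ∃ B, IsBrick A B ∧ ℳ = leftPerp A {B} := by
  obtain ⟨hℳ, ℳs, hℳs, hcover⟩ := hℳ
  obtain ⟨X, hX, hXℳ⟩ := Set.exists_of_ssubset ((hcover ℳs hℳs).mpr subset_rfl)
  have := hℳs.1 X hX
  obtain ⟨U, hU, hquot⟩ := hℳ.exists_quotient_notMem_forall_quotient_mem hXℳ
  set B := ModuleCat.of A (X ⧸ U)
  have hBℳs : B ∈ ℳs := hℳs.mem_of_surjective (N := B) hX U.mkQ U.mkQ_surjective
  have := hℳs.1 B hBℳs
  have hB : IsBrick A B := hℳ.isBrick_of_forall_quotient_mem hU hquot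
  have := hB.2.1
  refine ⟨B, hB, (hℳ.subset_leftPerp_of_forall_quotient_mem hU hquot).eq_of_not_ssubset ?_⟩
  intro hlt
  exact notMem_leftPerp_singleton_self ((hcover _ (isTorsionClass_leftPerp {B})).mp hlt hBℳs)

end TorsionClasses

theorem bricks_biject_with_cmi_torsionClasses_general (A : Type) [Ring A] [IsArtinianRing A] :
    (∀ B, IsBrick A B → IsCMITors A (leftPerp A (Fgen A B))) ∧
    (∀ ℳ, IsCMITors A ℳ → ∃ B, IsBrick A B ∧ ℳ = leftPerp A (Fgen A B)) ∧
    (∀ B B', IsBrick A B → IsBrick A B' →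
      leftPerp A (Fgen A B) = leftPerp A (Fgen A B') → Nonempty (B ≃ₗ[A] B')) := by
  have hperp {B : ModuleCat.{0} A} (hB : IsBrick A B) :
      leftPerp A (Fgen A B) = leftPerp A {B} :=
    have := hB.1
    leftPerp_Fgen
  refine ⟨fun B hB => hperp hB ▸ hB.isCMITors_leftPerp, fun ℳ hℳ => ?_, fun B B' hB hB' h => ?_⟩
  · obtain ⟨B, hB, rfl⟩ := hℳ.exists_isBrick_eq_leftPerp
    exact ⟨B, hB, (hperp hB).symm⟩
  · rw [hperp hB, hperp hB'] at h
    exact hB.nonempty_linearEquiv_of_leftPerp_eq hB' h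

theorem bricks_biject_with_cmi_torsionClasses
    (k A : Type) [Field k] [Ring A] [Algebra k A] [FiniteDimensional k A] :
    (∀ B, IsBrick A B → IsCMITors A (leftPerp A (Fgen A B))) ∧
    (∀ ℳ, IsCMITors A ℳ → ∃ B, IsBrick A B ∧ ℳ = leftPerp A (Fgen A B)) ∧
    (∀ B B', IsBrick A B → IsBrick A B' →
      leftPerp A (Fgen A B) = leftPerp A (Fgen A B') → Nonempty (B ≃ₗ[A] B')) := by
  have := IsArtinianRing.of_finite k A
  exact bricks_biject_with_cmi_torsionClasses_general A
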